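/- arXiv:1111.4768 — 4 statements merged into one kernel-verified Lean document; each statement's English description precedes it below -/
import Mathlib

section
/- Let 0 < ε < 1 and let d ≥ 1 be a natural number. Let R : {1,…,d} → ℝ be nonnegative and satisfy the polymatroidal constraints ∑_{i∈J} R_i ≤ 1 − ε^{|J|} for every subset J ⊆ {1,…,d}. Then for every permutation π of {1,…,d}, ∑_{i=1}^{d} R_{π(i)} / (1 − ε^i) ≤ ∑_{i=1}^{d} 1/i. -/
/-!
Write `f k = 1 - ε ^ k` and `r i = R (π i)`. The cut-set constraints on the prefixes of `π` say
that the partial sums of `r` are at most those of the increments `f (i + 1) - f i`. The weights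
`1 / f (i + 1)` are decreasing, so summation by parts gives
`∑ r i / f (i + 1) ≤ ∑ (f (i + 1) - f i) / f (i + 1)`, and each term on the right is at most
`1 / (i + 1)` because a geometric sum of `i + 1` terms is at least `i + 1` times its last term.
The summation by parts is the induction in `weighted_sum_add_slack_le`.
-/

/-- The relative increment `(f (n + 1) - f n) / f (n + 1)` of `f k = 1 - ε ^ k` is at most
`1 / (n + 1)`. -/
lemma increment_div_le (ε : ℝ) (hε0 : 0 < ε) (hε1 : ε < 1) (n : ℕ) :
    (ε ^ n - ε ^ (n + 1)) / (1 - ε ^ (n + 1)) ≤ 1 / ((n : ℝ) + 1) := by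
  have hf : 0 < 1 - ε ^ (n + 1) := sub_pos.2 (pow_lt_one₀ hε0.le hε1 n.succ_ne_zero)
  have hgeom : ((n : ℝ) + 1) * ε ^ n ≤ ∑ j ∈ Finset.range (n + 1), ε ^ j := by
    have h := Finset.card_nsmul_le_sum (Finset.range (n + 1)) (fun j => ε ^ j) (ε ^ n)
      (fun j hj => pow_le_pow_of_le_one hε0.le hε1.le (by simp at hj; omega))
    simpa using h
  have hsum : (∑ j ∈ Finset.range (n + 1), ε ^ j) * (1 - ε) = 1 - ε ^ (n + 1) :=
    geom_sum_mul_neg ε (n + 1)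
  rw [div_le_div_iff₀ hf (by positivity), ← hsum]
  have := mul_le_mul_of_nonneg_right hgeom (sub_nonneg.2 hε1.le)
  rw [pow_succ]
  linarith

/-- Summation by parts in inductive form. The extra term is the slack of the `n`-th prefix
constraint; since it is nonnegative, its weight may be lowered from `1 / f n` to
`1 / f (n + 1)` at each step. -/
lemma weighted_sum_add_slack_le (ε : ℝ) (hε0 : 0 < ε) (hε1 : ε < 1) (d : ℕ) (r : ℕ → ℝ)
    (hr : ∀ n ≤ d, ∑ i ∈ Finset.range n, r i ≤ 1 - ε ^ n) (n : ℕ) (hn : n ≤ d) :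
    ∑ i ∈ Finset.range n, r i / (1 - ε ^ (i + 1)) +
        (1 - ε ^ n - ∑ i ∈ Finset.range n, r i) / (1 - ε ^ (n + 1)) ≤
      ∑ i ∈ Finset.range n, 1 / ((i : ℝ) + 1) := by
  induction n with
  | zero => simp
  | succ n ih =>
    have hf : 0 < 1 - ε ^ (n + 1) := sub_pos.2 (pow_lt_one₀ hε0.le hε1 n.succ_ne_zero)
    have hmono : 1 - ε ^ (n + 1) ≤ 1 - ε ^ (n + 1 + 1) :=
      sub_le_sub_left (pow_le_pow_of_le_one hε0.le hε1.le (Nat.le_succ _)) 1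
    have hslack := div_le_div_of_nonneg_left (sub_nonneg.2 (hr (n + 1) hn)) hf hmono
    have hsplit : (1 - ε ^ (n + 1) - ∑ i ∈ Finset.range (n + 1), r i) / (1 - ε ^ (n + 1)) =
        (1 - ε ^ n - ∑ i ∈ Finset.range n, r i) / (1 - ε ^ (n + 1)) +
          (ε ^ n - ε ^ (n + 1)) / (1 - ε ^ (n + 1)) - r n / (1 - ε ^ (n + 1)) := by
      rw [Finset.sum_range_succ]
      ring
    have hinc := increment_div_le ε hε0 hε1 n
    have hprev := ih (Nat.le_of_succ_le hn)
    rw [Finset.sum_range_succ (fun i => r i / (1 - ε ^ (i + 1))),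
      Finset.sum_range_succ (fun i : ℕ => 1 / ((i : ℝ) + 1))]
    linarith

/-- For the d-user symmetric broadcast erasure channel with erasure probability ε,
any rate tuple in the cut-set region `∑_{i∈J} R_i ≤ 1 - ε^{|J|}` satisfies, for every
permutation π, `∑_{i=1}^d R_{π(i)}/(1-ε^i) ≤ ∑_{i=1}^d 1/i` (the harmonic number). -/
theorem erasure_bc_feedback_region_contains_cut_over_harmonic
    (ε : ℝ) (hε0 : 0 < ε) (hε1 : ε < 1) (d : ℕ) (hd : 1 ≤ d)
    (R : Fin d → ℝ) (hRnn : ∀ i, 0 ≤ R i)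
    (hcut : ∀ J : Finset (Fin d), ∑ i ∈ J, R i ≤ 1 - ε ^ J.card) :
    ∀ π : Equiv.Perm (Fin d),
      ∑ i : Fin d, R (π i) / (1 - ε ^ ((i : ℕ) + 1)) ≤
        ∑ i : Fin d, (1 : ℝ) / ((i : ℕ) + 1) := by
  intro π
  let r : ℕ → ℝ := fun k => if h : k < d then R (π ⟨k, h⟩) else 0
  have hr : ∀ n ≤ d, ∑ i ∈ Finset.range n, r i ≤ 1 - ε ^ n := by
    intro n hn
    -- the cut-set constraint for `J = {π 0, …, π (n - 1)}`
    have h := hcut (Finset.univ.map ((Fin.castLEEmb hn).trans π.toEmbedding))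
    rw [Finset.sum_map, Finset.card_map, Finset.card_univ, Fintype.card_fin] at h
    rw [← Fin.sum_univ_eq_sum_range]
    refine le_trans (le_of_eq (Finset.sum_congr rfl fun i _ => ?_)) h
    simp only [r, dif_pos (i.isLt.trans_le hn)]
    rfl
  have hmain := weighted_sum_add_slack_le ε hε0 hε1 d r hr d le_rfl
  have hslack : 0 ≤ (1 - ε ^ d - ∑ i ∈ Finset.range d, r i) / (1 - ε ^ (d + 1)) :=
    div_nonneg (sub_nonneg.2 (hr d le_rfl)) (sub_nonneg.2 (pow_le_one₀ hε0.le hε1.le))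
  rw [← Fin.sum_univ_eq_sum_range (fun i => r i / (1 - ε ^ (i + 1))),
    ← Fin.sum_univ_eq_sum_range (fun i : ℕ => 1 / ((i : ℝ) + 1))] at hmain
  have heq : ∑ i : Fin d, R (π i) / (1 - ε ^ ((i : ℕ) + 1)) =
      ∑ i : Fin d, r i / (1 - ε ^ ((i : ℕ) + 1)) :=
    Finset.sum_congr rfl fun i _ => by simp [r]
  linarith
end

section
/- Let 0 < ε < 1 and let d ≥ 1 be a natural number. Let R : {1,…,d} → ℝ be nonnegative and satisfy ∑_{i∈J} R_i ≤ 1 − ε^{|J|} for every subset J ⊆ {1,…,d}. Then for every permutation π of {1,…,d}, ∑_{i=1}^{d} R_{π(i)} / (1 − ε^i) ≤ ∑_{i=1}^{d} (ε^{i−1} − ε^i)/(1 − ε^i). -/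
/-!
The weights `1 / (1 - ε ^ (i + 1))` are positive and decrease in `i`. The cut constraint for
`J = {π 0, …, π (k - 1)}` says that the first `k` terms of `R ∘ π` sum to at most
`1 - ε ^ k = ∑ i < k, (ε ^ i - ε ^ (i + 1))`, so the partial sums of `R ∘ π` are dominated by
those of the greedy point. Abel summation (`sum_mul_le_of_antitone`) turns this domination into
the inequality between the weighted sums.
-/

/-- Abel summation: if the partial sums of `x` are nonpositive, then replacing decreasing weights
by the last (smallest) one can only increase the weighted sum. -/
theorem sum_mul_le_of_antitone {w x : ℕ → ℝ} (hw : Antitone w) (n : ℕ)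
    (hx : ∀ k ≤ n, ∑ i ∈ Finset.range k, x i ≤ 0) :
    ∑ i ∈ Finset.range n, x i * w i ≤ (∑ i ∈ Finset.range n, x i) * w (n - 1) := by
  induction n with
  | zero => simp
  | succ n ih =>
    have h1 := ih fun k hk => hx k (by omega)
    have h2 := mul_le_mul_of_nonpos_left (hw (Nat.sub_le n 1)) (hx n (by omega))
    rw [Finset.sum_range_succ, Finset.sum_range_succ, Nat.add_sub_cancel, add_mul]
    linarith

/-- The maximum of `∑_i R_{π(i)}/(1-ε^i)` over the polymatroid
`{R ≥ 0 : ∑_{i∈J} R_i ≤ 1 - ε^{|J|}}` is bounded by the greedy value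
`∑_{i=1}^d (ε^{i-1} - ε^i)/(1 - ε^i)`. -/
theorem erasure_bc_greedy_optimum
    (ε : ℝ) (hε0 : 0 < ε) (hε1 : ε < 1) (d : ℕ) (hd : 1 ≤ d)
    (R : Fin d → ℝ) (hRnn : ∀ i, 0 ≤ R i)
    (hcut : ∀ J : Finset (Fin d), ∑ i ∈ J, R i ≤ 1 - ε ^ J.card) :
    ∀ π : Equiv.Perm (Fin d),
      ∑ i : Fin d, R (π i) / (1 - ε ^ ((i : ℕ) + 1)) ≤
        ∑ i : Fin d, (ε ^ (i : ℕ) - ε ^ ((i : ℕ) + 1)) / (1 - ε ^ ((i : ℕ) + 1)) := by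
  intro π
  have hpos : ∀ k : ℕ, 0 < 1 - ε ^ (k + 1) := fun k =>
    sub_pos.2 (pow_lt_one₀ hε0.le hε1 k.succ_ne_zero)
  let w : ℕ → ℝ := fun k => (1 - ε ^ (k + 1))⁻¹
  have hw : Antitone w := antitone_nat_of_succ_le fun k => by
    refine inv_anti₀ (hpos k) (sub_le_sub_left ?_ 1)
    exact pow_le_pow_of_le_one hε0.le hε1.le (by omega)
  -- `R ∘ π` extended by zero to all of `ℕ`
  let r : ℕ → ℝ := fun k => if h : k < d then R (π ⟨k, h⟩) else 0
  let x : ℕ → ℝ := fun k => r k - (ε ^ k - ε ^ (k + 1))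
  have hx : ∀ k ≤ d, ∑ i ∈ Finset.range k, x i ≤ 0 := by
    intro k hk
    have h1 := hcut (Finset.univ.map ((Fin.castLEEmb hk).trans π.toEmbedding))
    rw [Finset.sum_map, Finset.card_map, Finset.card_univ, Fintype.card_fin] at h1
    have h2 : ∑ i ∈ Finset.range k, r i =
        ∑ i : Fin k, R (((Fin.castLEEmb hk).trans π.toEmbedding) i) := by
      rw [Finset.sum_range]
      refine Finset.sum_congr rfl fun i _ => ?_
      exact dif_pos (i.2.trans_le hk)
    have h3 : ∑ i ∈ Finset.range k, (ε ^ i - ε ^ (i + 1)) = 1 - ε ^ k := by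
      rw [Finset.sum_range_sub', pow_zero]
    simp only [x]
    rw [Finset.sum_sub_distrib, h2, h3]
    linarith
  have key : ∑ i ∈ Finset.range d, x i * w i ≤ 0 :=
    (sum_mul_le_of_antitone hw d hx).trans
      (mul_nonpos_of_nonpos_of_nonneg (hx d le_rfl) (inv_nonneg.2 (hpos _).le))
  rw [Finset.sum_range] at key
  rw [← sub_nonpos, ← Finset.sum_sub_distrib]
  refine le_of_eq_of_le (Finset.sum_congr rfl fun i _ => ?_) key
  simp only [x, r, w, i.2, dif_pos, div_eq_mul_inv, sub_mul, Fin.eta]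
end

section
/- Let μ be a probability measure on ℝ supported on the positive reals, such that the identity y ↦ y satisfies ∫ y dμ = 1, the function y ↦ log y is μ-integrable, and set a := e^{−∫ log y dμ(y)}. Then for every c > 0 for which y ↦ log(1 + a·c·y) is μ-integrable, log(1 + c) ≤ ∫ log(1 + a·c·y) dμ(y). -/
/-!
This is Jensen's inequality for `x ↦ log (1 + a * c * exp x)` at `x = log y`. The tangent line of
`log_one_add_mul_ge_tangent` at `t = a * y` bounds the integrand below by an affine function of
`log y`. The constant `a` is normalized so that `∫ log (a * y) dμ = 0`, hence the bound integrates
to `log (1 + c)`.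
-/

open MeasureTheory

/-- The tangent line at `x = 0` of the convex function `x ↦ log (1 + c * exp x)`, written in the
variable `t = exp x`; it follows from the concavity of `log` with weights `1 / (1 + c)` and
`c / (1 + c)`. -/
lemma log_one_add_mul_ge_tangent {c t : ℝ} (hc : 0 < c) (ht : 0 < t) :
    Real.log (1 + c) + c / (1 + c) * Real.log t ≤ Real.log (1 + c * t) := by
  have h := strictConcaveOn_log_Ioi.concaveOn.2 (Set.mem_Ioi.2 one_pos) (Set.mem_Ioi.2 ht)
    (by positivity : 0 ≤ 1 / (1 + c)) (by positivity : 0 ≤ c / (1 + c)) (by field_simp)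
  simp only [smul_eq_mul, Real.log_one, mul_zero, zero_add, mul_one] at h
  have e : 1 + c * t = (1 + c) * (1 / (1 + c) + c / (1 + c) * t) := by field_simp
  rw [e, Real.log_mul (by positivity) (by positivity)]
  linarith

/-- If `μ` is a probability measure on ℝ supported on the positive reals with unit mean,
`log` is `μ`-integrable, and `a := e^{-∫ log y dμ}`, then for every `c > 0` with
`y ↦ log(1 + a c y)` integrable, `log(1 + c) ≤ ∫ log(1 + a c y) dμ(y)`. -/
theorem ergodic_capacity_lower_bound
    (μ : Measure ℝ) [IsProbabilityMeasure μ]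
    (hpos : ∀ᵐ y ∂μ, 0 < y)
    (hid : Integrable (fun y : ℝ => y) μ) (hmean : ∫ y, y ∂μ = 1)
    (hlog : Integrable (fun y : ℝ => Real.log y) μ)
    (a : ℝ) (ha : a = Real.exp (-∫ y, Real.log y ∂μ)) :
    ∀ c : ℝ, 0 < c →
      Integrable (fun y : ℝ => Real.log (1 + a * c * y)) μ →
      Real.log (1 + c) ≤ ∫ y, Real.log (1 + a * c * y) ∂μ := by
  intro c hc hint
  have ha0 : 0 < a := ha ▸ Real.exp_pos _
  have hla : Real.log a = -∫ y, Real.log y ∂μ := by rw [ha, Real.log_exp]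
  have hi : Integrable (fun y : ℝ => c / (1 + c) * (Real.log a + Real.log y)) μ :=
    ((integrable_const _).add hlog).const_mul _
  have hval : ∫ y, (Real.log (1 + c) + c / (1 + c) * (Real.log a + Real.log y)) ∂μ
      = Real.log (1 + c) := by
    rw [integral_add (integrable_const _) hi, integral_const_mul,
      integral_add (integrable_const _) hlog]
    simp [hla]
  rw [← hval]
  refine integral_mono_ae ((integrable_const _).add hi) hint ?_
  filter_upwards [hpos] with y hy
  have h := log_one_add_mul_ge_tangent hc (mul_pos ha0 hy)
  rw [Real.log_mul ha0.ne' hy.ne'] at h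
  rwa [show a * c * y = c * (a * y) by ring]
end

section
/- Let 0 < ε < 1 and let d ≥ 1 be a natural number. Then ∑_{i=1}^{d} (ε^{i−1} − ε^i)/(1 − ε^i) ≤ ∑_{i=1}^{d} 1/i. -/
/-- Each of the `i + 1` terms of `1 + ε + ⋯ + ε ^ i = (1 - ε ^ (i + 1)) / (1 - ε)` is at least the
last one; multiplied through by `1 - ε`, this makes the target inequality hold term by term. -/
theorem succ_mul_pow_sub_pow_le (ε : ℝ) (hε0 : 0 < ε) (hε1 : ε < 1) (i : ℕ) :
    ((i : ℝ) + 1) * (ε ^ i - ε ^ (i + 1)) ≤ 1 - ε ^ (i + 1) := by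
  have hsum : ((i : ℝ) + 1) * ε ^ i ≤ ∑ k ∈ Finset.range (i + 1), ε ^ k := by
    have h := Finset.card_nsmul_le_sum (Finset.range (i + 1)) (fun k => ε ^ k) (ε ^ i)
      (fun k hk => pow_le_pow_of_le_one hε0.le hε1.le
        (Nat.lt_succ_iff.mp (Finset.mem_range.mp hk)))
    simpa using h
  calc ((i : ℝ) + 1) * (ε ^ i - ε ^ (i + 1)) = ((i : ℝ) + 1) * ε ^ i * (1 - ε) := by ring
    _ ≤ (∑ k ∈ Finset.range (i + 1), ε ^ k) * (1 - ε) :=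
        mul_le_mul_of_nonneg_right hsum (sub_nonneg.mpr hε1.le)
    _ = 1 - ε ^ (i + 1) := geom_sum_mul_neg ε (i + 1)

/-- The greedy optimum is bounded by the harmonic number:
`∑_{i=1}^d (ε^{i-1} - ε^i)/(1 - ε^i) ≤ ∑_{i=1}^d 1/i`. -/
theorem greedy_optimum_le_harmonic (ε : ℝ) (hε0 : 0 < ε) (hε1 : ε < 1)
    (d : ℕ) (hd : 1 ≤ d) :
    ∑ i ∈ Finset.range d, (ε ^ i - ε ^ (i + 1)) / (1 - ε ^ (i + 1)) ≤
      ∑ i ∈ Finset.range d, (1 : ℝ) / (i + 1) := by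
  refine Finset.sum_le_sum fun i _ => ?_
  have hpos : 0 < 1 - ε ^ (i + 1) :=
    sub_pos.mpr (pow_lt_one₀ hε0.le hε1 (Nat.succ_ne_zero i))
  rw [div_le_div_iff₀ hpos (by positivity)]
  linarith [succ_mul_pow_sub_pow_le ε hε0 hε1 i]
end
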